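/- Let C_X ≤ (Fin 12 → ZMod 2) be the row space of the five vectors (three blocks of four): 1111 0000 0000, 0000 1111 0000, 0000 0000 1111, 1100 1010 0110, 0110 1100 1010, and let C_Z ≤ (Fin 12 → ZMod 2) be the row space of the five vectors: 1111 0000 0000, 0000 1111 0000, 0000 0000 1111, 0101 0011 0110, 0110 0101 0011. Then: (i) C_X and C_Z are orthogonal (⟨u,v⟩ = 0 for all u ∈ C_X, v ∈ C_Z); (ii) both C_X and C_Z have F₂-dimension 5; (iii) the minimum Hamming weight over {v : ∀ h ∈ C_X, ⟨v,h⟩ = 0, v ∉ C_Z} equals 4, and the minimum Hamming weight over {v : ∀ h ∈ C_Z, ⟨v,h⟩ = 0, v ∉ C_X} equals 4. (That is, this CSS code is the [[12,2,4]] code obtained by concatenating the [[3,1,2]]₄ code with the [[4,2,2]] code.) -/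

import Mathlib

/-- The standard dot product on binary vectors. -/
def dotV {n : ℕ} (u v : Fin n → ZMod 2) : ZMod 2 := ∑ j, u j * v j

/-- The Hamming weight of a binary vector. -/
def hw {n : ℕ} (v : Fin n → ZMod 2) : ℕ := (Finset.univ.filter fun j => v j ≠ 0).card

def x1 : Fin 12 → ZMod 2 := ![1,1,1,1, 0,0,0,0, 0,0,0,0]
def x2 : Fin 12 → ZMod 2 := ![0,0,0,0, 1,1,1,1, 0,0,0,0]
def x3 : Fin 12 → ZMod 2 := ![0,0,0,0, 0,0,0,0, 1,1,1,1]
def x4 : Fin 12 → ZMod 2 := ![1,1,0,0, 1,0,1,0, 0,1,1,0]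
def x5 : Fin 12 → ZMod 2 := ![0,1,1,0, 1,1,0,0, 1,0,1,0]

def z1 : Fin 12 → ZMod 2 := ![1,1,1,1, 0,0,0,0, 0,0,0,0]
def z2 : Fin 12 → ZMod 2 := ![0,0,0,0, 1,1,1,1, 0,0,0,0]
def z3 : Fin 12 → ZMod 2 := ![0,0,0,0, 0,0,0,0, 1,1,1,1]
def z4 : Fin 12 → ZMod 2 := ![0,1,0,1, 0,0,1,1, 0,1,1,0]
def z5 : Fin 12 → ZMod 2 := ![0,1,1,0, 0,1,0,1, 0,0,1,1]

/-- The X-check row space of the `[[12,2,4]]` code. -/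
def CX : Submodule (ZMod 2) (Fin 12 → ZMod 2) :=
  Submodule.span (ZMod 2) {x1, x2, x3, x4, x5}

/-- The Z-check row space of the `[[12,2,4]]` code. -/
def CZ : Submodule (ZMod 2) (Fin 12 → ZMod 2) :=
  Submodule.span (ZMod 2) {z1, z2, z3, z4, z5}

/-!
Each of `CX` and `CZ` contains the all-ones vector, so every vector dual to it has even weight. The
columns of each check matrix are pairwise distinct: the first three checks tell the three blocks
apart, and within a block the last two checks run through all four elements of `𝔽₂²`. Hence a dual
vector cannot have weight two either, and a nonzero one has weight at least four. The bound is
attained by two words of weight four, one dual to `CX` and the other to `CZ`, with odd overlap: an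
element of `CZ` would be orthogonal to the second word, so the first lies outside `CZ`, and likewise
the second lies outside `CX`.
-/

open Matrix

section RowSpace

variable {l m n R : Type*}

theorem dotProduct_eq_zero_of_mem_span_row [Fintype n] [CommSemiring R] {G : Matrix m n R}
    {v c : n → R} (hv : G *ᵥ v = 0) (hc : c ∈ Submodule.span R (Set.range G.row)) :
    v ⬝ᵥ c = 0 := by
  have h_le : Submodule.span R (Set.range G.row) ≤ LinearMap.ker (dotProductBilin R R v) := by
    rw [Submodule.span_le]
    rintro _ ⟨i, rfl⟩
    exact (dotProduct_comm v (G.row i)).trans (congrFun hv i)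
  exact h_le hc

theorem dotProduct_eq_zero_of_mul_transpose_eq_zero [Fintype n] [CommSemiring R]
    {G : Matrix m n R} {H : Matrix l n R} (hGH : G * Hᵀ = 0) {u v : n → R}
    (hu : u ∈ Submodule.span R (Set.range G.row)) (hv : v ∈ Submodule.span R (Set.range H.row)) :
    u ⬝ᵥ v = 0 := by
  have hG_row (i : l) : G *ᵥ H.row i = 0 := funext fun k ↦ congrFun₂ hGH k i
  have hHu : H *ᵥ u = 0 := funext fun i ↦ dotProduct_eq_zero_of_mem_span_row (hG_row i) hu
  exact dotProduct_eq_zero_of_mem_span_row hHu hv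

theorem finrank_span_row_of_det_submatrix_ne_zero [Fintype m] [DecidableEq m] [CommRing R]
    [IsDomain R] {G : Matrix m n R} (f : m → n) (hf : (G.submatrix id f).det ≠ 0) :
    Module.finrank R (Submodule.span R (Set.range G.row)) = Fintype.card m :=
  finrank_span_eq_card <|
    .of_comp (LinearMap.funLeft R R f) (linearIndependent_rows_of_det_ne_zero hf)

theorem separatesPoints_span_row [Semiring R] {G : Matrix m n R}
    (hG : Function.Injective G.col) :
    (Submodule.span R (Set.range G.row) : Set (n → R)).SeparatesPoints := by
  intro i j hij
  obtain ⟨k, hk⟩ := Function.ne_iff.1 (hG.ne hij)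
  exact ⟨G.row k, Submodule.subset_span ⟨k, rfl⟩, hk⟩

end RowSpace

section DualWeight

variable {ι : Type*} [Fintype ι]

theorem dotProduct_eq_sum_ne_zero (v c : ι → ZMod 2) : v ⬝ᵥ c = ∑ i with v i ≠ 0, c i := by
  rw [Finset.sum_filter]
  refine Finset.sum_congr rfl fun i _ ↦ ?_
  generalize v i = a
  generalize c i = b
  revert a b
  decide

theorem even_hammingNorm_of_dotProduct_one_eq_zero {v : ι → ZMod 2} (hv : v ⬝ᵥ 1 = 0) :
    Even (hammingNorm v) := by
  rw [← ZMod.natCast_eq_zero_iff_even, ← hv, dotProduct_eq_sum_ne_zero]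
  simp [hammingNorm]

theorem hammingNorm_ne_two_of_separatesPoints {C : Set (ι → ZMod 2)} (hC : C.SeparatesPoints)
    {v : ι → ZMod 2} (hv : ∀ c ∈ C, v ⬝ᵥ c = 0) : hammingNorm v ≠ 2 := by
  classical
  intro h_two
  obtain ⟨i, j, hij, h_supp⟩ := Finset.card_eq_two.1 h_two
  obtain ⟨c, hcC, hc⟩ := hC hij
  have h_sum : c i + c j = 0 := by
    rw [← Finset.sum_pair hij, ← h_supp, ← dotProduct_eq_sum_ne_zero, hv c hcC]
  exact hc (CharTwo.add_eq_zero.1 h_sum)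

theorem four_le_hammingNorm {C : Set (ι → ZMod 2)} (h_one : 1 ∈ C) (hC : C.SeparatesPoints)
    {v : ι → ZMod 2} (hv : ∀ c ∈ C, v ⬝ᵥ c = 0) (hv₀ : v ≠ 0) : 4 ≤ hammingNorm v := by
  obtain ⟨k, hk⟩ := even_hammingNorm_of_dotProduct_one_eq_zero (hv 1 h_one)
  have h_pos : hammingNorm v ≠ 0 := hammingNorm_ne_zero_iff.2 hv₀
  have h_two : hammingNorm v ≠ 2 := hammingNorm_ne_two_of_separatesPoints hC hv
  omega

end DualWeight

theorem sInf_hw_dual_diff_eq_four {n : ℕ} {C D : Submodule (ZMod 2) (Fin n → ZMod 2)}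
    (h_one : 1 ∈ C) (hC : (C : Set (Fin n → ZMod 2)).SeparatesPoints) {v w : Fin n → ZMod 2}
    (hv_dual : ∀ c ∈ C, v ⬝ᵥ c = 0) (hw_dual : ∀ d ∈ D, w ⬝ᵥ d = 0) (hwv : w ⬝ᵥ v ≠ 0)
    (hv_four : hammingNorm v = 4) :
    sInf (hw '' {u | (∀ c ∈ C, dotV u c = 0) ∧ u ∉ D}) = 4 := by
  refine IsLeast.csInf_eq ⟨⟨v, ⟨hv_dual, fun hvD ↦ hwv (hw_dual v hvD)⟩, hv_four⟩, ?_⟩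
  rintro _ ⟨u, ⟨hu, huD⟩, rfl⟩
  exact four_le_hammingNorm h_one hC hu fun hu₀ ↦ huD (hu₀ ▸ D.zero_mem)

/-- The check matrix whose rows are the given generators of `CX`, so that its columns are the
syndromes of single errors. -/
def xChecks : Matrix (Fin 5) (Fin 12) (ZMod 2) := .of ![x1, x2, x3, x4, x5]

/-- The check matrix whose rows are the given generators of `CZ`, the counterpart of `xChecks`. -/
def zChecks : Matrix (Fin 5) (Fin 12) (ZMod 2) := .of ![z1, z2, z3, z4, z5]

/-- A common information set of `CX` and `CZ`: five coordinates on which a codeword of either code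
is determined. Three lie in the first block, where the columns of the last two checks at these
places are affinely independent, and one in each other block, to detect the remaining two checks. -/
def infoSet : Fin 5 → Fin 12 := ![0, 2, 3, 7, 11]

/-- The support of a logical `Z` operator of minimum weight: a word dual to `CX` outside `CZ`. -/
def zLogical : Fin 12 → ZMod 2 := ![0,0,0,0, 0,0,1,1, 0,1,0,1]

/-- The support of a logical `X` operator of minimum weight, anticommuting with the logical `Z`
operator on `zLogical`: a word dual to `CZ` outside `CX`. -/
def xLogical : Fin 12 → ZMod 2 := ![0,0,0,0, 0,0,1,1, 0,1,1,0]

theorem CX_eq_span_row : CX = Submodule.span (ZMod 2) (Set.range xChecks.row) := by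
  change CX = Submodule.span (ZMod 2) (Set.range ![x1, x2, x3, x4, x5])
  simp only [CX, range_cons, range_empty, Set.union_empty, Set.singleton_union]

theorem CZ_eq_span_row : CZ = Submodule.span (ZMod 2) (Set.range zChecks.row) := by
  change CZ = Submodule.span (ZMod 2) (Set.range ![z1, z2, z3, z4, z5])
  simp only [CZ, range_cons, range_empty, Set.union_empty, Set.singleton_union]

theorem xChecks_mul_transpose_zChecks : xChecks * zChecksᵀ = 0 := by
  decide +kernel

theorem finrank_CX : Module.finrank (ZMod 2) CX = 5 := by
  have h_det : (xChecks.submatrix id infoSet).det ≠ 0 := by decide +kernel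
  rw [CX_eq_span_row]
  exact finrank_span_row_of_det_submatrix_ne_zero infoSet h_det

theorem finrank_CZ : Module.finrank (ZMod 2) CZ = 5 := by
  have h_det : (zChecks.submatrix id infoSet).det ≠ 0 := by decide +kernel
  rw [CZ_eq_span_row]
  exact finrank_span_row_of_det_submatrix_ne_zero infoSet h_det

theorem one_mem_CX : 1 ∈ CX := by
  have h_blocks : 1 = x1 + x2 + x3 := by decide
  rw [h_blocks]
  refine add_mem (add_mem ?_ ?_) ?_ <;> exact Submodule.subset_span (by simp)

theorem one_mem_CZ : 1 ∈ CZ := by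
  have h_blocks : 1 = z1 + z2 + z3 := by decide
  rw [h_blocks]
  refine add_mem (add_mem ?_ ?_) ?_ <;> exact Submodule.subset_span (by simp)

theorem separatesPoints_CX : (CX : Set (Fin 12 → ZMod 2)).SeparatesPoints := by
  have h_col : Function.Injective xChecks.col := by decide +kernel
  rw [CX_eq_span_row]
  exact separatesPoints_span_row h_col

theorem separatesPoints_CZ : (CZ : Set (Fin 12 → ZMod 2)).SeparatesPoints := by
  have h_col : Function.Injective zChecks.col := by decide +kernel
  rw [CZ_eq_span_row]
  exact separatesPoints_span_row h_col

theorem zLogical_dotProduct_eq_zero_of_mem_CX {c : Fin 12 → ZMod 2} (hc : c ∈ CX) :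
    zLogical ⬝ᵥ c = 0 := by
  have h_syndrome : xChecks *ᵥ zLogical = 0 := by decide +kernel
  exact dotProduct_eq_zero_of_mem_span_row h_syndrome (CX_eq_span_row ▸ hc)

theorem xLogical_dotProduct_eq_zero_of_mem_CZ {c : Fin 12 → ZMod 2} (hc : c ∈ CZ) :
    xLogical ⬝ᵥ c = 0 := by
  have h_syndrome : zChecks *ᵥ xLogical = 0 := by decide +kernel
  exact dotProduct_eq_zero_of_mem_span_row h_syndrome (CZ_eq_span_row ▸ hc)

theorem xLogical_dotProduct_zLogical : xLogical ⬝ᵥ zLogical = 1 := by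
  decide +kernel

theorem stmt15 :
    (∀ u ∈ CX, ∀ v ∈ CZ, dotV u v = 0) ∧
    Module.finrank (ZMod 2) CX = 5 ∧
    Module.finrank (ZMod 2) CZ = 5 ∧
    sInf (hw '' {v : Fin 12 → ZMod 2 | (∀ h ∈ CX, dotV v h = 0) ∧ v ∉ CZ}) = 4 ∧
    sInf (hw '' {v : Fin 12 → ZMod 2 | (∀ h ∈ CZ, dotV v h = 0) ∧ v ∉ CX}) = 4 := by
  have h_anticomm : xLogical ⬝ᵥ zLogical ≠ 0 := xLogical_dotProduct_zLogical ▸ one_ne_zero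
  refine ⟨fun u hu v hv ↦ ?_, finrank_CX, finrank_CZ, ?_, ?_⟩
  · rw [CX_eq_span_row] at hu
    rw [CZ_eq_span_row] at hv
    exact dotProduct_eq_zero_of_mul_transpose_eq_zero xChecks_mul_transpose_zChecks hu hv
  · exact sInf_hw_dual_diff_eq_four one_mem_CX separatesPoints_CX
      (fun _ ↦ zLogical_dotProduct_eq_zero_of_mem_CX)
      (fun _ ↦ xLogical_dotProduct_eq_zero_of_mem_CZ) h_anticomm (by decide)
  · exact sInf_hw_dual_diff_eq_four one_mem_CZ separatesPoints_CZ
      (fun _ ↦ xLogical_dotProduct_eq_zero_of_mem_CZ)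
      (fun _ ↦ zLogical_dotProduct_eq_zero_of_mem_CX)
      (dotProduct_comm xLogical zLogical ▸ h_anticomm) (by decide)
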